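/- arXiv:1601.03174 — 6 statements merged into one kernel-verified Lean document; each statement's English description precedes it below -/
import Mathlib

section
/- Let k ≥ 2 and let G be a d-regular graph on n vertices with d ≥ k−1. Then G contains a clique on k vertices if and only if there exist a vertex set U ⊆ V(G), a set D of edges of G−U, and a set A of unordered pairs of distinct non-adjacent vertices of V(G)∖U, with |U| + |D| + |A| ≤ k(k−1)/2, such that the degree multiset of G−U−D+A consists of n−k copies of d and k copies of d−(k−1). -/
/-- The degree of a vertex, as the `ncard` of its neighbor set. -/
noncomputable def ndeg {V : Type*} (H : SimpleGraph V) (v : V) : ℕ :=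
  (H.neighborSet v).ncard

/-- The graph `G - U - D + A`, obtained from `G` by deleting the vertices of `U`
(together with all incident edges), deleting the edges of `D` and adding the pairs of `A`
as edges. (The deleted vertices become isolated; degrees are only read off `V ∖ U`.) -/
def edit {V : Type*} (G : SimpleGraph V) (U : Finset V) (D A : Set (Sym2 V)) :
    SimpleGraph V :=
  SimpleGraph.fromEdgeSet ((G.edgeSet \ (D ∪ {e : Sym2 V | ∃ u ∈ U, u ∈ e})) ∪ A)

lemma edit_adj {V : Type*} [DecidableEq V] (G : SimpleGraph V) (D A : Set (Sym2 V)) (v w : V) :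
    (edit G ∅ D A).Adj v w ↔ ((G.Adj v w ∧ s(v, w) ∉ D) ∨ s(v, w) ∈ A) ∧ v ≠ w := by
  simp [edit, SimpleGraph.fromEdgeSet_adj]
  have := @SimpleGraph.Adj.ne _ G v w
  tauto

theorem clique_iff_edit_to_degree_sequence
    {V : Type*} [Fintype V] [DecidableEq V] (n k d : ℕ) (hk : 2 ≤ k) (hd : k - 1 ≤ d)
    (hn : Fintype.card V = n) (G : SimpleGraph V)
    (hreg : ∀ v : V, ndeg G v = d) :
    (∃ K : Finset V, G.IsNClique k K) ↔
      ∃ (U : Finset V) (D A : Finset (Sym2 V)),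
        (∀ e ∈ D, e ∈ G.edgeSet ∧ ∀ u ∈ U, u ∉ e) ∧
        (∀ e ∈ A, ¬ e.IsDiag ∧ e ∉ G.edgeSet ∧ ∀ u ∈ U, u ∉ e) ∧
        U.card + D.card + A.card ≤ k * (k - 1) / 2 ∧
        ((Finset.univ \ U).val.map fun v => ndeg (edit G U ↑D ↑A) v) =
          Multiset.replicate (n - k) d + Multiset.replicate k (d - (k - 1)) := by
  classical
  constructor
  · rintro ⟨K, hK⟩
    have hKc : K.card = k := hK.card_eq
    have hKq := hK.isClique
    have memD : ∀ v w, s(v, w) ∈ K.offDiag.image Sym2.mk.uncurry ↔ v ∈ K ∧ w ∈ K ∧ v ≠ w := by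
      intro v w
      simp only [Finset.mem_image, Finset.mem_offDiag, Prod.exists, Function.uncurry_apply_pair, Sym2.eq_iff]
      constructor
      · rintro ⟨a, b, ⟨ha, hb, hab⟩, ⟨rfl, rfl⟩ | ⟨rfl, rfl⟩⟩
        · exact ⟨ha, hb, hab⟩
        · exact ⟨hb, ha, hab.symm⟩
      · rintro h
        exact ⟨v, w, h, Or.inl ⟨rfl, rfl⟩⟩
    refine ⟨∅, K.offDiag.image Sym2.mk.uncurry, ∅, ?_, by simp, ?_, ?_⟩
    · intro e
      induction e with
      | _ v w =>
        rw [memD]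
        rintro ⟨hv, hw, hvw⟩
        exact ⟨hKq hv hw hvw, by simp⟩
    · have := Sym2.card_image_offDiag K
      rw [hKc, Nat.choose_two_right] at this
      simp only [Finset.card_empty]
      omega
    · have h1 : ∀ v ∈ K, ndeg (edit G ∅ ↑(K.offDiag.image Sym2.mk.uncurry) ↑(∅ : Finset (Sym2 V))) v = d - (k - 1) := by
        intro v hv
        rw [← hreg v, ← hKc, ← Finset.card_erase_of_mem hv]
        unfold ndeg
        rw [← Set.ncard_coe_finset, ← Set.ncard_sdiff]
        · congr 1
          ext w
          simp only [SimpleGraph.mem_neighborSet, edit_adj, Finset.mem_coe, memD, Set.mem_sdiff, Finset.mem_erase]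
          have := @SimpleGraph.Adj.ne _ G v w
          simp only [Finset.notMem_empty]
          grind
        · intro w hw
          simp only [Finset.mem_coe, Finset.mem_erase] at hw
          exact hKq hv hw.2 hw.1.symm
      have h2 : ∀ v ∈ Kᶜ, ndeg (edit G ∅ ↑(K.offDiag.image Sym2.mk.uncurry) ↑(∅ : Finset (Sym2 V))) v = d := by
        intro v hv
        rw [← hreg v]
        unfold ndeg
        congr 1
        ext w
        simp only [SimpleGraph.mem_neighborSet, edit_adj, Finset.mem_coe, memD]
        have := @SimpleGraph.Adj.ne _ G v w
        simp only [Finset.notMem_empty]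
        simp only [Finset.mem_compl] at hv
        grind
      have h3 : (Finset.univ \ ∅ : Finset V).val = Kᶜ.val + K.val := by
        have : (Finset.univ \ ∅ : Finset V) = Kᶜ.disjUnion K disjoint_compl_left := by
          ext x; simp; tauto
        rw [this]; rfl
      rw [h3, Multiset.map_add, Multiset.map_congr rfl h1, Multiset.map_congr rfl h2,
        Multiset.map_const', Multiset.map_const']
      simp only [Finset.card_val, Finset.card_compl, hKc, hn]
  · rintro ⟨U, D, A, hD, hA, hc, hm⟩
    have hcard := congrArg Multiset.card hm
    simp only [Multiset.card_map, Finset.card_val, Multiset.card_add, Multiset.card_replicate] at hcard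
    rw [← Finset.compl_eq_univ_sdiff, Finset.card_compl, hn] at hcard
    have hU : U = ∅ := by
      have := Finset.card_le_univ U
      rw [← Finset.card_eq_zero]; omega
    subst hU
    set f := fun v => ndeg (edit G ∅ ↑D ↑A) v with hf
    set S : Finset V := Finset.univ.filter (fun v => d - (k - 1) = f v) with hS
    have hSc : S.card = k := by
      have := congrArg (Multiset.count (d - (k - 1))) hm
      rw [Multiset.count_map, Multiset.count_add, Multiset.count_replicate,
        Multiset.count_replicate, if_neg (by omega), if_pos rfl, zero_add] at this
      rw [← this, hS]
      simp [Finset.card_def]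
    let N : V → Finset V := fun v => Finset.univ.filter (fun w => s(v, w) ∈ D)
    have hN : ∀ v ∈ S, k - 1 ≤ (N v).card := by
      intro v hv
      have hfv : d - (k - 1) = f v := by simpa [hS] using hv
      have hsub : G.neighborSet v ⊆ (edit G ∅ ↑D ↑A).neighborSet v ∪ ↑(N v) := by
        intro w hw
        have hw' : G.Adj v w := hw
        simp only [Set.mem_union, SimpleGraph.mem_neighborSet, edit_adj, Finset.mem_coe, N,
          Finset.mem_filter, Finset.mem_univ, true_and]
        have := hw'.ne
        tauto
      have h1 := (Set.ncard_le_ncard hsub (Set.toFinite _)).trans (Set.ncard_union_le _ _)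
      rw [Set.ncard_coe_finset] at h1
      have h2 : d ≤ f v + (N v).card := by
        rw [← hreg v]; exact h1
      omega
    have hND : ∀ v, (N v).card ≤ (D.filter (fun e => v ∈ e)).card := by
      intro v
      apply Finset.card_le_card_of_injOn (fun w => s(v, w))
      · intro w hw
        simp [N] at hw
        simp [hw]
      · intro a _ b _ h
        exact Sym2.congr_right.1 h
    have hdc : ∑ v ∈ S, (D.filter (fun e => v ∈ e)).card = ∑ e ∈ D, (S.filter (fun v => v ∈ e)).card :=
      Finset.sum_card_bipartiteAbove_eq_sum_card_bipartiteBelow (fun v e => v ∈ e)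
    have hlow : k * (k - 1) ≤ ∑ v ∈ S, (D.filter (fun e => v ∈ e)).card := by
      rw [← hSc, ← smul_eq_mul]
      apply Finset.card_nsmul_le_sum
      intro v hv
      rw [hSc]
      exact (hN v hv).trans (hND v)
    have hle2 : ∀ e ∈ D, (S.filter (fun v => v ∈ e)).card ≤ 2 := by
      intro e _
      induction e with
      | _ a b =>
        refine (Finset.card_le_card (t := {a, b}) ?_).trans Finset.card_le_two
        intro x hx
        simpa using (Finset.mem_filter.1 hx).2
    have hin : ∀ v w, s(v, w) ∈ D → w ∈ S := by
      intro v w hvw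
      by_contra hw
      have hlt : ∑ e ∈ D, (S.filter (fun v => v ∈ e)).card < ∑ e ∈ D, 2 := by
        apply Finset.sum_lt_sum hle2
        refine ⟨_, hvw, ?_⟩
        have : (S.filter (fun x => x ∈ s(v, w))).card ≤ ({v} : Finset V).card := by
          apply Finset.card_le_card
          intro x hx
          rw [Finset.mem_filter, Sym2.mem_iff] at hx
          rcases hx with ⟨h1, rfl | rfl⟩
          · simp
          · exact absurd h1 hw
        rw [Finset.card_singleton] at this
        omega
      rw [Finset.sum_const, smul_eq_mul] at hlt
      omega
    refine ⟨S, ?_, hSc⟩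
    intro v hv w hw hvw
    have hsub : N v ⊆ S.erase v := by
      intro x hx
      have hx' : s(v, x) ∈ D := by simpa [N] using hx
      have hadj : G.Adj v x := (hD _ hx').1
      exact Finset.mem_erase.2 ⟨hadj.ne.symm, hin _ _ hx'⟩
    have heq := Finset.eq_of_subset_of_card_le hsub (by
      rw [Finset.card_erase_of_mem hv, hSc]; exact hN v hv)
    have : w ∈ N v := by
      rw [heq]; exact Finset.mem_erase.2 ⟨hvw.symm, hw⟩
    have hx' : s(v, w) ∈ D := by simpa [N] using this
    exact (hD _ hx').1
end

section
/- Let k ≥ 2, let G be a d-regular graph, and let D be a set of edges of G with |D| ≤ k(k−1)/2. If in the graph G−D exactly k vertices have degree d−(k−1) and every other vertex has degree d, then |D| = k(k−1)/2 and D is exactly the set of all unordered pairs of those k vertices; in particular, these k vertices form a clique on k vertices in G. -/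
theorem edgeDeletion_to_degree_sequence_gives_clique
    {V : Type*} [Fintype V] (G : SimpleGraph V) (k d : ℕ) (hk : 2 ≤ k)
    (hreg : ∀ v : V, ndeg G v = d)
    (D : Finset (Sym2 V)) (hDE : ↑D ⊆ G.edgeSet) (hDcard : D.card ≤ k * (k - 1) / 2)
    (T : Finset V) (hT : T.card = k)
    (hdegT : ∀ v ∈ T, (ndeg (G.deleteEdges ↑D) v : ℤ) = (d : ℤ) - ((k : ℤ) - 1))
    (hdegnT : ∀ v ∉ T, ndeg (G.deleteEdges ↑D) v = d) :
    D.card = k * (k - 1) / 2 ∧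
    (∀ e : Sym2 V, e ∈ D ↔ ¬ e.IsDiag ∧ ∀ v ∈ e, v ∈ T) ∧
    G.IsNClique k T := by
  classical
  have hadj : ∀ v w, s(v, w) ∈ D → G.Adj v w := fun v w h => hDE h
  have hsum : ∀ v, ndeg (G.deleteEdges ↑D) v + {w | s(v, w) ∈ D}.ncard = d := by
    intro v
    rw [← hreg v]
    unfold ndeg
    rw [← Set.ncard_union_eq _ (Set.toFinite _) (Set.toFinite _)]
    · congr 1
      ext w
      have := hadj v w
      simp only [Set.mem_union, SimpleGraph.mem_neighborSet, SimpleGraph.deleteEdges_adj,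
        Set.mem_setOf_eq, Finset.mem_coe]
      tauto
    · rw [Set.disjoint_left]
      intro w hw
      simp only [SimpleGraph.mem_neighborSet, SimpleGraph.deleteEdges_adj,
        Finset.mem_coe] at hw
      exact hw.2
  have hin : ∀ v w, s(v, w) ∈ D → v ∈ T := by
    intro v w h
    by_contra hv
    have h1 := hsum v
    rw [hdegnT v hv] at h1
    have h2 : {w | s(v, w) ∈ D}.ncard = 0 := by omega
    rw [Set.ncard_eq_zero (Set.toFinite _)] at h2
    have : w ∈ {w | s(v, w) ∈ D} := h
    rw [h2] at this
    exact this
  have hall : ∀ v ∈ T, ∀ w ∈ T, v ≠ w → s(v, w) ∈ D := by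
    intro v hv w hw hne
    have h1 := hsum v
    have h2 := hdegT v hv
    have hsub : {w | s(v, w) ∈ D} ⊆ (↑(T.erase v) : Set V) := by
      intro x hx
      have hx' : s(v, x) ∈ D := hx
      rw [Finset.mem_coe, Finset.mem_erase]
      exact ⟨(hadj v x hx').ne', hin x v (by rwa [Sym2.eq_swap])⟩
    have h3 := Set.eq_of_subset_of_ncard_le hsub (by
      rw [Set.ncard_coe_finset, Finset.card_erase_of_mem hv]; omega) (Set.toFinite _)
    have : w ∈ (↑(T.erase v) : Set V) := by
      rw [Finset.mem_coe, Finset.mem_erase]; exact ⟨hne.symm, hw⟩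
    rw [← h3] at this
    exact this
  have hchar : ∀ e : Sym2 V, e ∈ D ↔ ¬ e.IsDiag ∧ ∀ v ∈ e, v ∈ T := by
    intro e
    induction e using Sym2.ind with
    | _ x y =>
      simp only [Sym2.mk_isDiag_iff, Sym2.mem_iff, forall_eq_or_imp, forall_eq]
      constructor
      · intro h
        exact ⟨(hadj x y h).ne, hin x y h, hin y x (by rwa [Sym2.eq_swap])⟩
      · rintro ⟨h, hx, hy⟩
        exact hall x hx y hy h
  refine ⟨?_, hchar, ?_⟩
  · have : D = T.sym2.filter (fun e => ¬ e.IsDiag) := by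
      ext e
      rw [hchar, Finset.mem_filter, Finset.mem_sym2_iff]
      tauto
    have h2 : D = T.offDiag.image (fun p => s(p.1, p.2)) := by
      ext e
      rw [hchar]
      induction e using Sym2.ind with
      | _ x y =>
        simp only [Sym2.mk_isDiag_iff, Sym2.mem_iff, forall_eq_or_imp, forall_eq,
          Finset.mem_image, Finset.mem_offDiag, Prod.exists]
        constructor
        · rintro ⟨h, hx, hy⟩
          exact ⟨x, y, ⟨hx, hy, h⟩, rfl⟩
        · rintro ⟨a, b, ⟨ha, hb, h⟩, he⟩
          rcases Sym2.eq_iff.1 he with ⟨rfl, rfl⟩ | ⟨rfl, rfl⟩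
          · exact ⟨h, ha, hb⟩
          · exact ⟨h.symm, hb, ha⟩
    rw [h2, ← Nat.choose_two_right, ← hT]
    exact Sym2.card_image_offDiag T
  · exact ⟨fun v hv w hw hne => hadj v w (hall v hv w hw hne), hT⟩
end

section
/- Let k ≥ 2, let G be a d-regular graph, and let A be a set of unordered pairs of distinct non-adjacent vertices of G with |A| ≤ k(k−1)/2. If in the graph G+A exactly k vertices have degree d+(k−1) and every other vertex has degree d, then |A| = k(k−1)/2, A is exactly the set of all unordered pairs of those k vertices, and these k vertices form an independent set of size k in G. -/
theorem edgeAddition_to_degree_sequence_gives_indepSet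
    {V : Type*} [Fintype V] (G : SimpleGraph V) (k d : ℕ) (hk : 2 ≤ k)
    (hreg : ∀ v : V, ndeg G v = d)
    (A : Finset (Sym2 V)) (hA : ∀ e ∈ A, ¬ e.IsDiag ∧ e ∉ G.edgeSet)
    (hAcard : A.card ≤ k * (k - 1) / 2)
    (T : Finset V) (hT : T.card = k)
    (hdegT : ∀ v ∈ T, ndeg (G ⊔ SimpleGraph.fromEdgeSet ↑A) v = d + (k - 1))
    (hdegnT : ∀ v ∉ T, ndeg (G ⊔ SimpleGraph.fromEdgeSet ↑A) v = d) :
    A.card = k * (k - 1) / 2 ∧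
    (∀ e : Sym2 V, e ∈ A ↔ ¬ e.IsDiag ∧ ∀ v ∈ e, v ∈ T) ∧
    (∀ u ∈ T, ∀ v ∈ T, u ≠ v → ¬ G.Adj u v) := by
  classical
  set H := SimpleGraph.fromEdgeSet (A : Set (Sym2 V)) with hH
  have hadj : ∀ u v, H.Adj u v ↔ s(u, v) ∈ A := by
    intro u v
    rw [hH, SimpleGraph.fromEdgeSet_adj]
    constructor
    · intro h
      exact_mod_cast h.1
    · intro h
      refine ⟨by exact_mod_cast h, ?_⟩
      have := (hA _ h).1
      simpa using this
  have hsum : ∀ v, ndeg (G ⊔ H) v = d + (H.neighborSet v).ncard := by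
    intro v
    rw [← hreg v]
    unfold ndeg
    rw [← Set.ncard_union_eq ?_ (Set.toFinite _) (Set.toFinite _)]
    · congr 1
    · rw [Set.disjoint_left]
      intro w hw hw2
      exact (hA _ ((hadj v w).1 hw2)).2 hw
  have hnT : ∀ v, v ∉ T → ∀ w, ¬ H.Adj v w := by
    intro v hv w hw
    have h1 := hdegnT v hv
    rw [hsum v] at h1
    have h2 : (H.neighborSet v).ncard = 0 := by omega
    rw [Set.ncard_eq_zero (Set.toFinite _)] at h2
    have h3 : w ∈ H.neighborSet v := hw
    rw [h2] at h3
    exact h3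
  have hTT : ∀ u v, H.Adj u v → u ∈ T ∧ v ∈ T := by
    intro u v h
    exact ⟨by_contra fun hu => hnT u hu v h, by_contra fun hv => hnT v hv u h.symm⟩
  have hall : ∀ u ∈ T, ∀ v ∈ T, u ≠ v → H.Adj u v := by
    intro u hu v hv huv
    have h1 := hdegT u hu
    rw [hsum u] at h1
    have h2 : (H.neighborSet u).ncard = k - 1 := by omega
    have hsub : H.neighborSet u ⊆ ((T.erase u : Finset V) : Set V) := by
      intro w hw
      have hw' : H.Adj u w := hw
      simp only [Finset.coe_erase, Set.mem_diff, Finset.mem_coe, Set.mem_singleton_iff]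
      exact ⟨(hTT u w hw').2, hw'.ne'⟩
    have heq := Set.eq_of_subset_of_ncard_le hsub
      (by rw [Set.ncard_coe_finset, Finset.card_erase_of_mem hu, h2, hT]) (Set.toFinite _)
    have : v ∈ H.neighborSet u := by
      rw [heq]
      simp [hv, huv.symm]
    exact this
  have hiff : ∀ e : Sym2 V, e ∈ A ↔ ¬ e.IsDiag ∧ ∀ v ∈ e, v ∈ T := by
    intro e
    induction e using Sym2.ind with
    | _ u v =>
      rw [← hadj]
      constructor
      · intro h
        refine ⟨by simpa using h.ne, ?_⟩
        intro w hw
        rcases Sym2.mem_iff.1 hw with rfl | rfl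
        · exact (hTT _ _ h).1
        · exact (hTT _ _ h).2
      · rintro ⟨h1, h2⟩
        exact hall u (h2 u (by simp)) v (h2 v (by simp)) (by simpa using h1)
  refine ⟨?_, hiff, ?_⟩
  · have hAe : A = T.offDiag.image Sym2.mk.uncurry := by
      ext e
      rw [hiff]
      induction e using Sym2.ind with
      | _ u v =>
        simp only [Finset.mem_image, Finset.mem_offDiag, Prod.exists]
        constructor
        · rintro ⟨h1, h2⟩
          exact ⟨u, v, ⟨h2 u (by simp), h2 v (by simp), by simpa using h1⟩, rfl⟩
        · rintro ⟨a, b, ⟨ha, hb, hab⟩, h⟩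
          have h' : s(a, b) = s(u, v) := h
          rw [← h']
          refine ⟨by simpa using hab, ?_⟩
          intro w hw
          rcases Sym2.mem_iff.1 hw with rfl | rfl
          · exact ha
          · exact hb
    rw [hAe, ← Nat.choose_two_right, ← hT]
    exact Sym2.card_image_offDiag T
  · intro u hu v hv huv hG
    exact (hA _ ((hadj u v).1 (hall u hu v hv huv))).2 hG
end

section
/- Let G be a graph whose maximum degree is at most D_max, let U ⊆ V(G), let D be a set of edges of G−U, and let A be a set of unordered pairs of distinct non-adjacent vertices of V(G)∖U, and let G' = G−U−D+A. Then for every nonnegative integer i, the number of vertices of degree i in G' and the number of vertices of degree i in G differ by at most (D_max+1)·|U| + 2|D| + 2|A|. -/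
theorem degree_vector_entries_change_boundedly
    {V : Type*} [Fintype V] (G : SimpleGraph V) (Dmax : ℕ)
    (hmax : ∀ v : V, ndeg G v ≤ Dmax)
    (U : Finset V) (D A : Finset (Sym2 V))
    (hD : ∀ e ∈ D, e ∈ G.edgeSet ∧ ∀ u ∈ U, u ∉ e)
    (hA : ∀ e ∈ A, ¬ e.IsDiag ∧ e ∉ G.edgeSet ∧ ∀ u ∈ U, u ∉ e) :
    ∀ i : ℕ,
      |({v : V | v ∉ U ∧ ndeg (edit G U ↑D ↑A) v = i}.ncard : ℤ) -
          ({v : V | ndeg G v = i}.ncard : ℤ)| ≤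
        (((Dmax + 1) * U.card + 2 * D.card + 2 * A.card : ℕ) : ℤ) := by
  classical
  intro i
  let B : Finset V := U ∪ U.biUnion (fun u => (G.neighborSet u).toFinset)
    ∪ D.biUnion (fun e => e.toFinset) ∪ A.biUnion (fun e => e.toFinset)
  have h2 : ∀ e : Sym2 V, e.toFinset.card ≤ 2 := by
    intro e
    rw [Sym2.card_toFinset]
    split_ifs <;> omega
  have hB : B.card ≤ (Dmax + 1) * U.card + 2 * D.card + 2 * A.card := by
    have hU : (U.biUnion (fun u => (G.neighborSet u).toFinset)).card ≤ U.card * Dmax := by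
      apply Finset.card_biUnion_le_card_mul
      intro u _
      have := hmax u
      rwa [ndeg, Set.ncard_eq_toFinset_card'] at this
    have hD2 : (D.biUnion (fun e => e.toFinset)).card ≤ D.card * 2 :=
      Finset.card_biUnion_le_card_mul _ _ _ (fun e _ => h2 e)
    have hA2 : (A.biUnion (fun e => e.toFinset)).card ≤ A.card * 2 :=
      Finset.card_biUnion_le_card_mul _ _ _ (fun e _ => h2 e)
    have h3 : B.card ≤ U.card + (U.biUnion (fun u => (G.neighborSet u).toFinset)).card
        + (D.biUnion (fun e => e.toFinset)).card + (A.biUnion (fun e => e.toFinset)).card := by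
      refine (Finset.card_union_le _ _).trans (Nat.add_le_add_right ?_ _)
      refine (Finset.card_union_le _ _).trans (Nat.add_le_add_right ?_ _)
      exact Finset.card_union_le _ _
    nlinarith
  have hdeg : ∀ v, v ∉ B → v ∉ U ∧ ndeg (edit G U ↑D ↑A) v = ndeg G v := by
    intro v hv
    simp only [B, Finset.mem_union, Finset.mem_biUnion, not_or, Set.mem_toFinset,
      Sym2.mem_toFinset, SimpleGraph.mem_neighborSet, not_exists, not_and] at hv
    obtain ⟨⟨⟨hvU, hvN⟩, hvD⟩, hvA⟩ := hv
    refine ⟨hvU, ?_⟩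
    unfold ndeg
    congr 1
    ext w
    simp only [SimpleGraph.mem_neighborSet, edit, SimpleGraph.fromEdgeSet_adj, Set.mem_union,
      Set.mem_diff, SimpleGraph.mem_edgeSet, Finset.mem_coe, Set.mem_setOf_eq]
    constructor
    · rintro ⟨h | h, _⟩
      · exact h.1
      · exact absurd (Sym2.mem_mk_left v w) (hvA _ h)
    · intro h
      refine ⟨Or.inl ⟨h, ?_⟩, h.ne⟩
      rintro (h' | ⟨u, hu, hue⟩)
      · exact hvD _ h' (Sym2.mem_mk_left v w)
      · rcases Sym2.mem_iff.1 hue with rfl | rfl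
        · exact hvU hu
        · exact hvN _ hu h.symm
  have key : ∀ S T : Set V, S ⊆ T ∪ ↑B → S.ncard ≤ T.ncard + B.card := by
    intro S T h
    refine (Set.ncard_le_ncard h (Set.toFinite _)).trans ?_
    refine (Set.ncard_union_le _ _).trans ?_
    rw [Set.ncard_coe_finset]
  have k1 := key {v : V | v ∉ U ∧ ndeg (edit G U ↑D ↑A) v = i} {v : V | ndeg G v = i} (by
    rintro v ⟨_, h⟩
    by_cases hv : v ∈ B
    · exact Or.inr hv
    · exact Or.inl ((hdeg v hv).2.symm.trans h))
  have k2 := key {v : V | ndeg G v = i} {v : V | v ∉ U ∧ ndeg (edit G U ↑D ↑A) v = i} (by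
    intro v h
    by_cases hv : v ∈ B
    · exact Or.inr hv
    · exact Or.inl ⟨(hdeg v hv).1, (hdeg v hv).2.trans h⟩)
  rw [abs_le]
  constructor <;> omega
end

section
/- Let G be a graph whose vertex set is partitioned into three sets R_v, Y_v, B_v and whose edge set is partitioned into two sets R_e, B_e. Let L = R_e ∪ {e ∈ E(G) : e is incident to a vertex of R_v} ∪ {uv ∈ E(G) : u, v ∈ Y_v}, and let H = G[L] with connected components H_1, …, H_s. Suppose R_v* ⊆ R_v, Y_v* ⊆ Y_v and R_e* ⊆ R_e satisfy: (iii) if u, v ∈ R_v ∪ Y_v and uv ∈ E(G), then u ∈ R_v* ∪ Y_v* if and only if v ∈ R_v* ∪ Y_v*; (iv) if u ∈ R_v ∪ Y_v and uv ∈ R_e, then u ∈ R_v* ∪ Y_v* if and only if uv ∈ R_e*; (v) if uv, vw ∈ R_e, then uv ∈ R_e* if and only if vw ∈ R_e*; (vi) if u, v are distinct vertices of R_v with a common neighbor in G, then u ∈ R_v* if and only if v ∈ R_v*; (vii) if u ∈ R_v and vw ∈ R_e with v a neighbor of u in G, then u ∈ R_v* if and only if vw ∈ R_e*. Then for every component H_i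 that contains a vertex of R_v* ∪ Y_v* or an edge of R_e*, it holds that V(H_i) ∩ R_v ⊆ R_v*, V(H_i) ∩ Y_v ⊆ Y_v*, and E(H_i) ∩ R_e ⊆ R_e*. -/
theorem components_of_marked_graph_fully_marked
    {V : Type*} (G : SimpleGraph V)
    (Rv Yv Bv : Set V) (Re Be : Set (Sym2 V))
    (hvcover : Rv ∪ Yv ∪ Bv = Set.univ)
    (hRY : Disjoint Rv Yv) (hRB : Disjoint Rv Bv) (hYB : Disjoint Yv Bv)
    (hecover : Re ∪ Be = G.edgeSet) (heDisj : Disjoint Re Be)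
    (L : Set (Sym2 V))
    (hL : L = Re ∪ {e ∈ G.edgeSet | ∃ u ∈ Rv, u ∈ e} ∪
      {e ∈ G.edgeSet | ∀ u ∈ e, u ∈ Yv})
    (Rs Ys : Set V) (Res : Set (Sym2 V))
    (hRs : Rs ⊆ Rv) (hYs : Ys ⊆ Yv) (hRes : Res ⊆ Re)
    (h3 : ∀ u v : V, u ∈ Rv ∪ Yv → v ∈ Rv ∪ Yv → G.Adj u v →
      (u ∈ Rs ∪ Ys ↔ v ∈ Rs ∪ Ys))
    (h4 : ∀ u v : V, u ∈ Rv ∪ Yv → s(u, v) ∈ Re → (u ∈ Rs ∪ Ys ↔ s(u, v) ∈ Res))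
    (h5 : ∀ u v w : V, s(u, v) ∈ Re → s(v, w) ∈ Re → (s(u, v) ∈ Res ↔ s(v, w) ∈ Res))
    (h6 : ∀ u v : V, u ≠ v → u ∈ Rv → v ∈ Rv → (∃ w, G.Adj u w ∧ G.Adj v w) →
      (u ∈ Rs ↔ v ∈ Rs))
    (h7 : ∀ u v w : V, u ∈ Rv → G.Adj u v → s(v, w) ∈ Re → (u ∈ Rs ↔ s(v, w) ∈ Res)) :
    ∀ C : (SimpleGraph.fromEdgeSet L).ConnectedComponent,
      ((∃ x : V, (SimpleGraph.fromEdgeSet L).connectedComponentMk x = C ∧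
          (∃ e ∈ L, x ∈ e) ∧ x ∈ Rs ∪ Ys) ∨
        (∃ e ∈ Res, ∀ x ∈ e, (SimpleGraph.fromEdgeSet L).connectedComponentMk x = C)) →
      ((∀ x : V, (SimpleGraph.fromEdgeSet L).connectedComponentMk x = C →
          (∃ e ∈ L, x ∈ e) → ((x ∈ Rv → x ∈ Rs) ∧ (x ∈ Yv → x ∈ Ys))) ∧
        (∀ e ∈ Re, e ∈ L →
          (∀ x ∈ e, (SimpleGraph.fromEdgeSet L).connectedComponentMk x = C) →
          e ∈ Res)) := by
  have hR : ∀ u, u ∈ Rs ∪ Ys → u ∈ Rv → u ∈ Rs := by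
    rintro u (h | h) hu
    · exact h
    · exact (Set.disjoint_left.mp hRY hu (hYs h)).elim
  have hY : ∀ u, u ∈ Rs ∪ Ys → u ∈ Yv → u ∈ Ys := by
    rintro u (h | h) hu
    · exact (Set.disjoint_left.mp hRY (hRs h) hu).elim
    · exact h
  let good : V → Prop := fun x => (x ∈ Rv ∪ Yv → x ∈ Rs ∪ Ys) ∧
    (∀ w, s(x, w) ∈ Re → s(x, w) ∈ Res) ∧ (∀ u ∈ Rv, G.Adj u x → u ∈ Rs)
  have gv : ∀ x, x ∈ Rs ∪ Ys → good x := by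
    intro x hx
    have hx' : x ∈ Rv ∪ Yv := Set.union_subset_union hRs hYs hx
    exact ⟨fun _ => hx, fun w hw => (h4 x w hx' hw).1 hx,
      fun u hu ha => hR u ((h3 u x (Or.inl hu) hx' ha).2 hx) hu⟩
  have ge : ∀ a b, s(a, b) ∈ Res → good a := by
    intro a b hab
    refine ⟨fun h => (h4 a b h (hRes hab)).2 hab, fun w hw => ?_,
      fun u hu ha => (h7 u a b hu ha (hRes hab)).2 hab⟩
    have hba : s(b, a) ∈ Res := by rw [Sym2.eq_swap]; exact hab
    exact (h5 b a w (hRes hba) hw).1 hba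
  have step : ∀ x y, (SimpleGraph.fromEdgeSet L).Adj x y → good x → good y := by
    intro x y hxy hg
    obtain ⟨g1, g2, g3⟩ := hg
    rw [SimpleGraph.fromEdgeSet_adj, hL] at hxy
    obtain ⟨(h | ⟨he, u, hu, hue⟩) | ⟨he, hyy⟩, hne⟩ := hxy
    · have := g2 y h
      rw [Sym2.eq_swap] at this
      exact ge y x this
    · have ha : G.Adj x y := he
      rcases Sym2.mem_iff.1 hue with rfl | rfl
      · have hm := g1 (Or.inl hu)
        have hs := hR _ hm hu
        refine ⟨fun h => (h3 _ _ (Or.inl hu) h ha).1 hm,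
          fun w hw => (h7 _ y w hu ha hw).1 hs, fun v hv hva => ?_⟩
        by_cases hvu : u = v
        · exact hvu ▸ hs
        · exact (h6 u v hvu hu hv ⟨y, ha, hva⟩).1 hs
      · exact gv _ (Or.inl (g3 _ hu ha.symm))
    · have ha : G.Adj x y := he
      have hx : x ∈ Yv := hyy x (Sym2.mem_mk_left x y)
      have hy : y ∈ Yv := hyy y (Sym2.mem_mk_right x y)
      exact gv y ((h3 x y (Or.inr hx) (Or.inr hy) ha).1 (g1 (Or.inr hx)))
  have walk : ∀ x y, (SimpleGraph.fromEdgeSet L).Walk x y → good x → good y := by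
    intro x y p
    induction p with
    | nil => exact id
    | cons h _ ih => exact fun hg => ih (step _ _ h hg)
  intro C hC
  have key : ∃ x, (SimpleGraph.fromEdgeSet L).connectedComponentMk x = C ∧ good x := by
    rcases hC with ⟨x, hx, _, hm⟩ | ⟨e, he, hx⟩
    · exact ⟨x, hx, gv x hm⟩
    · induction e with
      | h a b => exact ⟨a, hx a (Sym2.mem_mk_left a b), ge a b he⟩
  obtain ⟨x, hx, hg⟩ := key
  have all : ∀ y, (SimpleGraph.fromEdgeSet L).connectedComponentMk y = C → good y := by
    intro y hy
    obtain ⟨p⟩ := SimpleGraph.ConnectedComponent.exact (hx.trans hy.symm)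
    exact walk x y p hg
  refine ⟨fun y hy _ => ⟨fun h => hR y ((all y hy).1 (Or.inl h)) h,
    fun h => hY y ((all y hy).1 (Or.inr h)) h⟩, fun e he _ hc => ?_⟩
  induction e with
  | h a b => exact (all a (hc a (Sym2.mem_mk_left a b))).2.1 b he
end

section
/- Let k be a nonnegative integer, let σ be a finite multiset of nonnegative integers with maximum Δ, and let G be a graph with maximum degree at most Δ. For each i ∈ {0, …, Δ} let W_i = {v ∈ V(G) : d_G(v) = i}, let W_i' ⊆ W_i be any subset of size min(|W_i|, 2k(Δ+1)), and let W = W_0' ∪ ⋯ ∪ W_Δ'. If there exists a set A of unordered pairs of distinct non-adjacent vertices of G with |A| ≤ k such that the degree multiset of G+A equals σ, then there exists such a set A with |A| ≤ k and degree multiset of G+A equal to σ in which every pair has both of its endpoints in W. -/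
open Classical in
theorem ndeg_sup_aux {V : Type*} [Fintype V] (G : SimpleGraph V) (A : Finset (Sym2 V))
    (hA : ∀ e ∈ A, ¬ e.IsDiag ∧ e ∉ G.edgeSet) (v : V) :
    ndeg (G ⊔ SimpleGraph.fromEdgeSet ↑A) v
      = ndeg G v + ndeg (SimpleGraph.fromEdgeSet (A : Set (Sym2 V))) v := by
  unfold ndeg
  rw [← Set.ncard_union_eq _ (Set.toFinite _) (Set.toFinite _)]
  · congr 1
  · rw [Set.disjoint_left]
    intro u hu hu'
    simp only [SimpleGraph.mem_neighborSet, SimpleGraph.fromEdgeSet_adj] at hu hu'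
    exact (hA _ hu'.1).2 hu

theorem ndeg_image_aux {V : Type*} [DecidableEq V] (p : Equiv.Perm V)
    (A : Finset (Sym2 V)) (v : V) :
    ndeg (SimpleGraph.fromEdgeSet (↑(A.image (Sym2.map p)) : Set (Sym2 V))) (p v)
      = ndeg (SimpleGraph.fromEdgeSet (A : Set (Sym2 V))) v := by
  unfold ndeg
  rw [← Set.ncard_image_of_injective ((SimpleGraph.fromEdgeSet (A : Set (Sym2 V))).neighborSet v) p.injective]
  congr 1
  ext u
  obtain ⟨u, rfl⟩ := p.surjective u
  have h : s(p v, p u) = Sym2.map p s(v, u) := by simp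
  rw [p.injective.mem_set_image]
  simp only [SimpleGraph.mem_neighborSet, SimpleGraph.fromEdgeSet_adj, Finset.mem_coe, h,
    (Sym2.map.injective p.injective).mem_finset_image, ne_eq, p.injective.eq_iff]

theorem edge_addition_solution_inside_W
    {V : Type*} [Fintype V] [DecidableEq V] (G : SimpleGraph V)
    (k Δ : ℕ) (σ : Multiset ℕ) (hσub : ∀ x ∈ σ, x ≤ Δ) (hσmem : Δ ∈ σ)
    (hG : ∀ v : V, ndeg G v ≤ Δ)
    (Ws : ℕ → Finset V)
    (hWsub : ∀ i ≤ Δ, ∀ v ∈ Ws i, ndeg G v = i)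
    (hWcard : ∀ i ≤ Δ,
      (Ws i).card = min {v : V | ndeg G v = i}.ncard (2 * k * (Δ + 1)))
    (A : Finset (Sym2 V))
    (hA : ∀ e ∈ A, ¬ e.IsDiag ∧ e ∉ G.edgeSet)
    (hAcard : A.card ≤ k)
    (hAdeg : (Finset.univ.val.map fun v : V =>
        ndeg (G ⊔ SimpleGraph.fromEdgeSet ↑A) v) = σ) :
    ∃ B : Finset (Sym2 V),
      (∀ e ∈ B, ¬ e.IsDiag ∧ e ∉ G.edgeSet) ∧ B.card ≤ k ∧
      (Finset.univ.val.map fun v : V =>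
        ndeg (G ⊔ SimpleGraph.fromEdgeSet ↑B) v) = σ ∧
      ∀ e ∈ B, ∀ v ∈ e, v ∈ (Finset.range (Δ + 1)).biUnion Ws := by
  classical
  set W := (Finset.range (Δ + 1)).biUnion Ws with hW
  let T : Finset (Sym2 V) → Finset V := fun A => A.biUnion Sym2.toFinset
  have memT : ∀ A v, v ∈ T A ↔ ∃ e ∈ A, v ∈ e := by
    intro A v; simp [T]
  induction hn : ((T A).filter (· ∉ W)).card using Nat.strong_induction_on generalizing A with
  | _ n ih =>
  by_cases hall : ∀ v ∈ T A, v ∈ W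
  · exact ⟨A, hA, hAcard, hAdeg, fun e he v hv => hall v ((memT _ _).2 ⟨e, he, hv⟩)⟩
  push Not at hall
  obtain ⟨v, hvT, hvW⟩ := hall
  have hvi := hG v
  have hvWs : v ∉ Ws (ndeg G v) := fun h =>
    hvW (Finset.mem_biUnion.2 ⟨_, Finset.mem_range.2 (by omega), h⟩)
  have hcard : (Ws (ndeg G v)).card = 2 * k * (Δ + 1) := by
    rw [hWcard _ hvi]
    apply min_eq_right
    by_contra hlt
    push Not at hlt
    have h1 := hWcard _ hvi
    rw [min_eq_left hlt.le] at h1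
    have h2 : (↑(Ws (ndeg G v)) : Set V) = {u : V | ndeg G u = ndeg G v} := by
      apply Set.eq_of_subset_of_ncard_le
      · intro u hu
        exact hWsub _ hvi u hu
      · rw [Set.ncard_coe_finset, h1]
      · exact Set.toFinite _
    apply hvWs
    rw [← Finset.mem_coe, h2]
    rfl
  let F : Finset V := T A ∪ (T A).biUnion (fun u => (G.neighborSet u).toFinset)
  have hTc : (T A).card ≤ 2 * k := by
    calc (T A).card ≤ A.card * 2 := by
          apply Finset.card_biUnion_le_card_mul
          intro e he
          rw [Sym2.card_toFinset]
          split_ifs <;> omega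
      _ ≤ 2 * k := by omega
  have hFc : F.card ≤ 2 * k * (Δ + 1) := by
    have h1 : ((T A).biUnion (fun u => (G.neighborSet u).toFinset)).card ≤ (T A).card * Δ := by
      apply Finset.card_biUnion_le_card_mul
      intro u _
      rw [← Set.ncard_eq_toFinset_card']
      exact hG u
    have h2 := Finset.card_union_le (T A) ((T A).biUnion (fun u => (G.neighborSet u).toFinset))
    have h3 := Nat.mul_le_mul_right Δ hTc
    calc F.card ≤ _ := h2
      _ ≤ 2 * k + 2 * k * Δ := by omega
      _ = _ := by ring
  have hvF : v ∈ F := Finset.mem_union_left _ hvT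
  obtain ⟨w, hwW, hwF⟩ : ∃ w ∈ Ws (ndeg G v), w ∉ F := by
    by_contra hcon
    push Not at hcon
    have hsub : Ws (ndeg G v) ⊆ F.erase v := by
      intro u hu
      refine Finset.mem_erase.2 ⟨?_, hcon u hu⟩
      rintro rfl
      exact hvWs hu
    have h1 := Finset.card_le_card hsub
    have h2 := Finset.card_erase_lt_of_mem hvF
    omega
  have hwT : w ∉ T A := fun h => hwF (Finset.mem_union_left _ h)
  have hwN : ∀ u ∈ T A, ¬ G.Adj u w := fun u hu h =>
    hwF (Finset.mem_union_right _ (Finset.mem_biUnion.2 ⟨u, hu, by simpa using h⟩))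
  have hwd : ndeg G w = ndeg G v := hWsub _ hvi w hwW
  have hwinW : w ∈ W := Finset.mem_biUnion.2 ⟨_, Finset.mem_range.2 (by omega), hwW⟩
  let p : Equiv.Perm V := Equiv.swap v w
  have hpG : ∀ x, ndeg G (p x) = ndeg G x := by
    intro x
    by_cases h1 : x = v
    · subst h1; simp [p, hwd]
    by_cases h2 : x = w
    · subst h2; simp [p, hwd]
    simp [p, Equiv.swap_apply_of_ne_of_ne h1 h2]
  let B := A.image (Sym2.map p)
  have hB : ∀ e ∈ B, ¬ e.IsDiag ∧ e ∉ G.edgeSet := by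
    intro e he
    obtain ⟨e, heA, rfl⟩ := Finset.mem_image.1 he
    have hTe : ∀ u ∈ e, u ∈ T A := fun u hu => (memT _ _).2 ⟨e, heA, hu⟩
    have h0 := hA e heA
    induction e using Sym2.ind with
    | _ a b =>
    have ha := hTe a (by simp)
    have hb := hTe b (by simp)
    have haw : a ≠ w := fun h => hwT (h ▸ ha)
    have hbw : b ≠ w := fun h => hwT (h ▸ hb)
    simp only [Sym2.map_mk, Sym2.mk_isDiag_iff, SimpleGraph.mem_edgeSet, p.injective.eq_iff] at h0 ⊢
    refine ⟨h0.1, ?_⟩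
    by_cases hav : a = v
    · have hbv : b ≠ v := fun h => h0.1 (hav.trans h.symm)
      have e1 : p a = w := by simp [p, hav]
      have e2 : p b = b := Equiv.swap_apply_of_ne_of_ne hbv hbw
      rw [e1, e2]
      exact fun h => hwN b hb h.symm
    · have e1 : p a = a := Equiv.swap_apply_of_ne_of_ne hav haw
      by_cases hbv : b = v
      · have e2 : p b = w := by simp [p, hbv]
        rw [e1, e2]
        exact hwN a ha
      · have e2 : p b = b := Equiv.swap_apply_of_ne_of_ne hbv hbw
        rw [e1, e2]
        exact h0.2
  have hBdeg : ∀ x, ndeg (G ⊔ SimpleGraph.fromEdgeSet ↑B) (p x)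
      = ndeg (G ⊔ SimpleGraph.fromEdgeSet ↑A) x := by
    intro x
    rw [ndeg_sup_aux G B hB, ndeg_sup_aux G A hA, hpG, ndeg_image_aux]
  refine ih _ ?_ B hB (Finset.card_image_le.trans hAcard) ?_ rfl
  · rw [← hn]
    apply Finset.card_lt_card
    rw [Finset.ssubset_iff_of_subset]
    · refine ⟨v, Finset.mem_filter.2 ⟨hvT, hvW⟩, ?_⟩
      intro h
      obtain ⟨e, he, hve⟩ := (memT _ _).1 (Finset.mem_filter.1 h).1
      obtain ⟨e, heA, rfl⟩ := Finset.mem_image.1 he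
      obtain ⟨u, hu, huv⟩ := Sym2.mem_map.1 hve
      have : u = w := by
        apply p.injective; rw [huv]; simp [p]
      exact hwT ((memT _ _).2 ⟨e, heA, this ▸ hu⟩)
    · intro x hx
      obtain ⟨hxT, hxW⟩ := Finset.mem_filter.1 hx
      obtain ⟨e, he, hxe⟩ := (memT _ _).1 hxT
      obtain ⟨e, heA, rfl⟩ := Finset.mem_image.1 he
      obtain ⟨u, hu, rfl⟩ := Sym2.mem_map.1 hxe
      have huT : u ∈ T A := (memT _ _).2 ⟨e, heA, hu⟩
      have huw : u ≠ w := fun h => hwT (h ▸ huT)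
      have huv : u ≠ v := by
        rintro rfl
        apply hxW
        simpa [p] using hwinW
      have e1 : p u = u := Equiv.swap_apply_of_ne_of_ne huv huw
      rw [e1] at hxW ⊢
      exact Finset.mem_filter.2 ⟨huT, hxW⟩
  · rw [← hAdeg]
    simp_rw [← hBdeg]
    have h1 : (Finset.univ : Finset V).val = (Finset.univ : Finset V).val.map p := by
      have := congrArg Finset.val (Finset.map_univ_equiv p)
      simpa using this.symm
    conv_lhs => rw [h1]
    rw [Multiset.map_map]
    rfl
end
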